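/- arXiv:2003.04425 — 5 statements merged into one kernel-verified Lean document; each statement's English description precedes it below -/
import Mathlib

section
/- Assume V is bounded and not P-almost surely constant, let σ > 0, and let g : ℝ → ℝ be a continuous function with values in (m, M). Then φ⁺_g(0) > φ⁻_g(0). -/
open MeasureTheory Filter Set

/-- Centered Gaussian density with variance `σ²`. -/
noncomputable def gq (σ z : ℝ) : ℝ :=
  Real.exp (-(z ^ 2) / (2 * σ ^ 2)) / (σ * Real.sqrt (2 * Real.pi))

/-- The averaged kernel `q̄(σ,x,z)`. -/
noncomputable def gqbar (σ x z : ℝ) : ℝ :=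
  if x = 0 then gq σ z else (1 / x) * ∫ y in (0:ℝ)..x, gq σ (y - z)

/-- `Φ⁺(y) = E[V·1_{V>y}]`. -/
noncomputable def Phip {Ω : Type*} [MeasurableSpace Ω] (P : Measure Ω) (V : Ω → ℝ) (y : ℝ) : ℝ :=
  ∫ ω in {ω | V ω > y}, V ω ∂P

/-- `Π⁺(y) = P(V > y)`. -/
noncomputable def Pip {Ω : Type*} [MeasurableSpace Ω] (P : Measure Ω) (V : Ω → ℝ) (y : ℝ) : ℝ :=
  (P {ω | V ω > y}).toReal

/-- `Φ⁻(y) = E[V·1_{V≤y}]`. -/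
noncomputable def Phim {Ω : Type*} [MeasurableSpace Ω] (P : Measure Ω) (V : Ω → ℝ) (y : ℝ) : ℝ :=
  ∫ ω in {ω | V ω ≤ y}, V ω ∂P

/-- `Π⁻(y) = P(V ≤ y)`. -/
noncomputable def Pim {Ω : Type*} [MeasurableSpace Ω] (P : Measure Ω) (V : Ω → ℝ) (y : ℝ) : ℝ :=
  (P {ω | V ω ≤ y}).toReal

/-- `Ψ⁺ = Φ⁺/Π⁺`. -/
noncomputable def Psip {Ω : Type*} [MeasurableSpace Ω] (P : Measure Ω) (V : Ω → ℝ) (y : ℝ) : ℝ :=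
  Phip P V y / Pip P V y

/-- `Ψ⁻ = Φ⁻/Π⁻`. -/
noncomputable def Psim {Ω : Type*} [MeasurableSpace Ω] (P : Measure Ω) (V : Ω → ℝ) (y : ℝ) : ℝ :=
  Phim P V y / Pim P V y

/-- `φ⁺_g`. -/
noncomputable def phip {Ω : Type*} [MeasurableSpace Ω] (P : Measure Ω) (V : Ω → ℝ)
    (σ : ℝ) (g : ℝ → ℝ) (x : ℝ) : ℝ :=
  (∫ z, Phip P V (g z) * gq σ (x - z)) / (∫ z, Pip P V (g z) * gq σ (x - z))

/-- `φ⁻_g`. -/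
noncomputable def phim {Ω : Type*} [MeasurableSpace Ω] (P : Measure Ω) (V : Ω → ℝ)
    (σ : ℝ) (g : ℝ → ℝ) (x : ℝ) : ℝ :=
  (∫ z, Phim P V (g z) * gq σ (x - z)) / (∫ z, Pim P V (g z) * gq σ (x - z))

/-- `φ_g`, equal to `φ⁺_g` on `[0,∞)` and `φ⁻_g` on `(−∞,0)`. -/
noncomputable def phig {Ω : Type*} [MeasurableSpace Ω] (P : Measure Ω) (V : Ω → ℝ)
    (σ : ℝ) (g : ℝ → ℝ) (x : ℝ) : ℝ :=
  if 0 ≤ x then phip P V σ g x else phim P V σ g x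

/-- The interior of the support of the law of `V` is `(m, M)` (with `V` bounded). -/
def SuppIoo {Ω : Type*} [MeasurableSpace Ω] (P : Measure Ω) (V : Ω → ℝ) (m M : ℝ) : Prop :=
  m < M ∧ (∀ᵐ ω ∂P, V ω ∈ Set.Icc m M) ∧
    (∀ y < M, 0 < P {ω | V ω > y}) ∧ (∀ y, m < y → 0 < P {ω | V ω ≤ y})

/-- Equation (E). -/
def SolvesE {Ω : Type*} [MeasurableSpace Ω] (P : Measure Ω) (V : Ω → ℝ)
    (σ : ℝ) (N : ℕ) (F : ℝ → ℝ) : Prop :=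
  ∀ x : ℝ, F x =
    ∫ z, ((1 / (N:ℝ)) * gq σ (x - z) + (((N:ℝ) - 1) / (N:ℝ)) * gqbar σ x z) * phig P V σ F z

/-!
Conditioning on `V > y` raises the mean of `V` and conditioning on `V ≤ y` lowers it, so
`Φ⁻(y) < E[V] Π⁻(y)` and `E[V] Π⁺(y) < Φ⁺(y)` whenever both events have positive probability.
Both inequalities survive integration against a positive weight in `z` with `y = g z`; hence `E[V]`
separates the two quotients.
-/

section Integral

variable {α : Type*} [MeasurableSpace α] {μ : Measure α} {f g : α → ℝ} {c : ℝ}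

lemma integral_lt_integral_of_ae_lt [NeZero μ] (hf : Integrable f μ) (hg : Integrable g μ)
    (hfg : ∀ᵐ a ∂μ, f a < g a) : ∫ a, f a ∂μ < ∫ a, g a ∂μ := by
  refine (integral_mono_ae hf hg (hfg.mono fun _ ↦ le_of_lt)).lt_of_ne fun heq ↦ ?_
  have hae := (integral_eq_iff_of_ae_le hf hg (hfg.mono fun _ ↦ le_of_lt)).1 heq
  obtain ⟨a, hlt, heq⟩ := (hfg.and hae).exists
  exact hlt.ne heq

lemma integral_pos_of_ae_pos [NeZero μ] (hf : Integrable f μ) (hpos : ∀ᵐ a ∂μ, 0 < f a) :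
    0 < ∫ a, f a ∂μ := by
  calc 0 = ∫ _, (0 : ℝ) ∂μ := (integral_zero α ℝ).symm
    _ < ∫ a, f a ∂μ := integral_lt_integral_of_ae_lt (integrable_zero α ℝ μ) hf hpos

lemma lt_integral_div_integral [NeZero μ] (hf : Integrable f μ) (hg : Integrable g μ)
    (hpos : ∀ᵐ a ∂μ, 0 < g a) (hlt : ∀ᵐ a ∂μ, c * g a < f a) :
    c < (∫ a, f a ∂μ) / ∫ a, g a ∂μ := by
  rw [lt_div_iff₀ (integral_pos_of_ae_pos hg hpos), ← integral_const_mul]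
  exact integral_lt_integral_of_ae_lt (hg.const_mul c) hf hlt

lemma integral_div_integral_lt [NeZero μ] (hf : Integrable f μ) (hg : Integrable g μ)
    (hpos : ∀ᵐ a ∂μ, 0 < g a) (hlt : ∀ᵐ a ∂μ, f a < c * g a) :
    (∫ a, f a ∂μ) / ∫ a, g a ∂μ < c := by
  rw [div_lt_iff₀ (integral_pos_of_ae_pos hg hpos), ← integral_const_mul]
  exact integral_lt_integral_of_ae_lt hf (hg.const_mul c) hlt

lemma measurable_setIntegral_of_antitone {ι : Type*} [LinearOrder ι] [TopologicalSpace ι]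
    [OrderClosedTopology ι] [MeasurableSpace ι] [BorelSpace ι] {s : ι → Set α} (hs : Antitone s)
    (hf : Integrable f μ) : Measurable fun i ↦ ∫ a in s i, f a ∂μ := by
  have antitone_of_nonneg {h : α → ℝ} (hh : Integrable h μ) (h0 : ∀ a, 0 ≤ h a) :
      Antitone fun i ↦ ∫ a in s i, h a ∂μ := fun _ _ hij ↦
    setIntegral_mono_set hh.integrableOn (ae_of_all _ h0) (hs hij).eventuallyLE
  have hsplit (i : ι) :
      ∫ a in s i, f a ∂μ = ∫ a in s i, max (f a) 0 ∂μ - ∫ a in s i, max (-f a) 0 ∂μ := by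
    rw [← integral_sub hf.pos_part.integrableOn hf.neg_part.integrableOn]
    simp only [max_zero_sub_max_neg_zero_eq_self]
  simp only [hsplit]
  exact (antitone_of_nonneg hf.pos_part fun _ ↦ le_max_right _ _).measurable.sub
    (antitone_of_nonneg hf.neg_part fun _ ↦ le_max_right _ _).measurable

lemma integrable_setIntegral_comp_mul_of_antitone {β ι : Type*} [MeasurableSpace β]
    {ν : Measure β} [LinearOrder ι] [TopologicalSpace ι] [OrderClosedTopology ι]
    [MeasurableSpace ι] [BorelSpace ι] {s : ι → Set α} (hs : Antitone s) (hf : Integrable f μ)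
    {φ : β → ι} (hφ : AEMeasurable φ ν) {w : β → ℝ} (hw : Integrable w ν) :
    Integrable (fun b ↦ (∫ a in s (φ b), f a ∂μ) * w b) ν := by
  refine hw.bdd_mul (c := ∫ a, ‖f a‖ ∂μ)
    ((measurable_setIntegral_of_antitone hs hf).comp_aemeasurable hφ).aestronglyMeasurable
    (ae_of_all _ fun b ↦ ?_)
  calc ‖∫ a in s (φ b), f a ∂μ‖
      ≤ ∫ a in s (φ b), ‖f a‖ ∂μ := norm_integral_le_integral_norm _
    _ ≤ ∫ a, ‖f a‖ ∂μ := setIntegral_le_integral hf.norm (ae_of_all _ fun _ ↦ norm_nonneg _)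

end Integral

section Gaussian

variable {σ : ℝ}

lemma gq_pos (hσ : 0 < σ) (z : ℝ) : 0 < gq σ z := by
  unfold gq
  positivity

lemma integrable_gq (hσ : σ ≠ 0) : Integrable (gq σ) := by
  have hexp := (integrable_exp_neg_mul_sq (b := (2 * σ ^ 2)⁻¹) (by positivity)).div_const
    (σ * Real.sqrt (2 * Real.pi))
  refine hexp.congr (ae_of_all _ fun z ↦ ?_)
  simp only [gq]
  ring_nf

end Gaussian

section Tails

variable {Ω : Type*} [MeasurableSpace Ω] {P : Measure Ω} {V : Ω → ℝ} {y : ℝ}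

lemma Phip_add_Phim (hV : Integrable V P) (y : ℝ) : Phip P V y + Phim P V y = ∫ ω, V ω ∂P := by
  have hcompl : {ω | V ω ≤ y} = {ω | V ω > y}ᶜ := by ext; simp
  rw [Phip, Phim, hcompl]
  exact integral_add_compl₀ (nullMeasurableSet_lt aemeasurable_const hV.aemeasurable) hV

lemma Pip_add_Pim [IsProbabilityMeasure P] (hV : AEMeasurable V P) (y : ℝ) :
    Pip P V y + Pim P V y = 1 := by
  have hcompl : {ω | V ω ≤ y} = {ω | V ω > y}ᶜ := by ext; simp
  rw [Pip, Pim, hcompl]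
  exact (measureReal_add_measureReal_compl₀
    (nullMeasurableSet_lt aemeasurable_const hV)).trans probReal_univ

lemma Pip_pos [IsFiniteMeasure P] (hy : 0 < P {ω | V ω > y}) : 0 < Pip P V y :=
  ENNReal.toReal_pos hy.ne' (measure_ne_top _ _)

lemma Pim_pos [IsFiniteMeasure P] (hy : 0 < P {ω | V ω ≤ y}) : 0 < Pim P V y :=
  ENNReal.toReal_pos hy.ne' (measure_ne_top _ _)

lemma Pip_mul_lt_Phip [IsFiniteMeasure P] (hV : Integrable V P) (hy : 0 < P {ω | V ω > y}) :
    Pip P V y * y < Phip P V y := by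
  have : NeZero (P.restrict {ω | V ω > y}) := ⟨Measure.restrict_eq_zero.not.2 hy.ne'⟩
  calc Pip P V y * y
      = ∫ _ in {ω | V ω > y}, y ∂P := by
        rw [setIntegral_const, smul_eq_mul, Pip, Measure.real]
    _ < Phip P V y := integral_lt_integral_of_ae_lt (integrable_const y) hV.integrableOn
        (ae_restrict_mem₀ (nullMeasurableSet_lt aemeasurable_const hV.aemeasurable))

lemma Phim_le_Pim_mul [IsFiniteMeasure P] (hV : Integrable V P) (y : ℝ) :
    Phim P V y ≤ Pim P V y * y := by
  calc Phim P V y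
      ≤ ∫ _ in {ω | V ω ≤ y}, y ∂P :=
        setIntegral_mono_on₀ hV.integrableOn (integrable_const y)
          (nullMeasurableSet_le hV.aemeasurable aemeasurable_const) fun _ hω ↦ hω
    _ = Pim P V y * y := by rw [setIntegral_const, smul_eq_mul, Pim, Measure.real]

lemma Phim_mul_Pip_lt_Phip_mul_Pim [IsFiniteMeasure P] (hV : Integrable V P)
    (hup : 0 < P {ω | V ω > y}) (hlo : 0 < P {ω | V ω ≤ y}) :
    Phim P V y * Pip P V y < Phip P V y * Pim P V y :=
  calc Phim P V y * Pip P V y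
      ≤ Pim P V y * y * Pip P V y :=
        mul_le_mul_of_nonneg_right (Phim_le_Pim_mul hV y) (Pip_pos hup).le
    _ = Pip P V y * y * Pim P V y := by ring
    _ < Phip P V y * Pim P V y := mul_lt_mul_of_pos_right (Pip_mul_lt_Phip hV hup) (Pim_pos hlo)

lemma integral_mul_Pip_lt_Phip [IsProbabilityMeasure P] (hV : Integrable V P)
    (hup : 0 < P {ω | V ω > y}) (hlo : 0 < P {ω | V ω ≤ y}) :
    (∫ ω, V ω ∂P) * Pip P V y < Phip P V y :=
  calc (∫ ω, V ω ∂P) * Pip P V y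
      = Phip P V y * Pip P V y + Phim P V y * Pip P V y := by
        rw [← Phip_add_Phim hV y, add_mul]
    _ < Phip P V y * Pip P V y + Phip P V y * Pim P V y :=
        add_lt_add_right (Phim_mul_Pip_lt_Phip_mul_Pim hV hup hlo) _
    _ = Phip P V y := by rw [← mul_add, Pip_add_Pim hV.aemeasurable, mul_one]

lemma Phim_lt_integral_mul_Pim [IsProbabilityMeasure P] (hV : Integrable V P)
    (hup : 0 < P {ω | V ω > y}) (hlo : 0 < P {ω | V ω ≤ y}) :
    Phim P V y < (∫ ω, V ω ∂P) * Pim P V y :=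
  calc Phim P V y
      = Phim P V y * Pip P V y + Phim P V y * Pim P V y := by
        rw [← mul_add, Pip_add_Pim hV.aemeasurable, mul_one]
    _ < Phip P V y * Pim P V y + Phim P V y * Pim P V y :=
        add_lt_add_left (Phim_mul_Pip_lt_Phip_mul_Pim hV hup hlo) _
    _ = (∫ ω, V ω ∂P) * Pim P V y := by rw [← Phip_add_Phim hV y, add_mul]

end Tails

lemma antitone_setOf_gt {Ω : Type*} (V : Ω → ℝ) : Antitone fun y ↦ {ω | V ω > y} :=
  fun _ _ hab _ hω ↦ hab.trans_lt hω

lemma antitone_setOf_le_neg {Ω : Type*} (V : Ω → ℝ) : Antitone fun y ↦ {ω | V ω ≤ -y} :=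
  fun _ _ hab _ hω ↦ le_trans hω (neg_le_neg hab)

section WeightedTails

variable {Ω α : Type*} [MeasurableSpace Ω] [MeasurableSpace α] {P : Measure Ω} {μ : Measure α}
  {V : Ω → ℝ} {g w : α → ℝ}

lemma integrable_Phip_comp_mul (hV : Integrable V P) (hg : AEMeasurable g μ)
    (hw : Integrable w μ) : Integrable (fun a ↦ Phip P V (g a) * w a) μ :=
  integrable_setIntegral_comp_mul_of_antitone (antitone_setOf_gt V) hV hg hw

lemma integrable_Phim_comp_mul (hV : Integrable V P) (hg : AEMeasurable g μ)
    (hw : Integrable w μ) : Integrable (fun a ↦ Phim P V (g a) * w a) μ := by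
  simpa only [Phim, Pi.neg_apply, neg_neg] using
    integrable_setIntegral_comp_mul_of_antitone (antitone_setOf_le_neg V) hV hg.neg hw

lemma integrable_Pip_comp_mul [IsFiniteMeasure P] (V : Ω → ℝ) (hg : AEMeasurable g μ)
    (hw : Integrable w μ) : Integrable (fun a ↦ Pip P V (g a) * w a) μ := by
  simpa only [Pip, ← measureReal_def, setIntegral_const, smul_eq_mul, mul_one] using
    integrable_setIntegral_comp_mul_of_antitone (antitone_setOf_gt V)
      (integrable_const (μ := P) (1 : ℝ)) hg hw

lemma integrable_Pim_comp_mul [IsFiniteMeasure P] (V : Ω → ℝ) (hg : AEMeasurable g μ)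
    (hw : Integrable w μ) : Integrable (fun a ↦ Pim P V (g a) * w a) μ := by
  simpa only [Pim, ← measureReal_def, setIntegral_const, smul_eq_mul, mul_one, Pi.neg_apply,
    neg_neg] using
    integrable_setIntegral_comp_mul_of_antitone (antitone_setOf_le_neg V)
      (integrable_const (μ := P) (1 : ℝ)) hg.neg hw

end WeightedTails

section Averages

variable {Ω : Type*} [MeasurableSpace Ω] {P : Measure Ω} [IsProbabilityMeasure P] {V : Ω → ℝ}
  {σ : ℝ} {g : ℝ → ℝ}

lemma integral_lt_phip (hV : Integrable V P) (hσ : 0 < σ) (hg : AEMeasurable g)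
    (hup : ∀ᵐ z, 0 < P {ω | V ω > g z}) (hlo : ∀ᵐ z, 0 < P {ω | V ω ≤ g z}) (x : ℝ) :
    ∫ ω, V ω ∂P < phip P V σ g x := by
  have hq : Integrable fun z ↦ gq σ (x - z) := (integrable_gq hσ.ne').comp_sub_left x
  refine lt_integral_div_integral (integrable_Phip_comp_mul hV hg hq)
    (integrable_Pip_comp_mul V hg hq) ?_ ?_
  · exact hup.mono fun z hz ↦ mul_pos (Pip_pos hz) (gq_pos hσ _)
  · filter_upwards [hup, hlo] with z hzup hzlo
    rw [← mul_assoc]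
    exact mul_lt_mul_of_pos_right (integral_mul_Pip_lt_Phip hV hzup hzlo) (gq_pos hσ _)

lemma phim_lt_integral (hV : Integrable V P) (hσ : 0 < σ) (hg : AEMeasurable g)
    (hup : ∀ᵐ z, 0 < P {ω | V ω > g z}) (hlo : ∀ᵐ z, 0 < P {ω | V ω ≤ g z}) (x : ℝ) :
    phim P V σ g x < ∫ ω, V ω ∂P := by
  have hq : Integrable fun z ↦ gq σ (x - z) := (integrable_gq hσ.ne').comp_sub_left x
  refine integral_div_integral_lt (integrable_Phim_comp_mul hV hg hq)
    (integrable_Pim_comp_mul V hg hq) ?_ ?_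
  · exact hlo.mono fun z hz ↦ mul_pos (Pim_pos hz) (gq_pos hσ _)
  · filter_upwards [hup, hlo] with z hzup hzlo
    rw [← mul_assoc]
    exact mul_lt_mul_of_pos_right (Phim_lt_integral_mul_Pim hV hzup hzlo) (gq_pos hσ _)

end Averages

theorem stmt1_general {Ω : Type*} [MeasurableSpace Ω] (P : Measure Ω) [IsProbabilityMeasure P]
    (V : Ω → ℝ) (hV : Integrable V P) (σ : ℝ) (hσ : 0 < σ) (g : ℝ → ℝ) (hg : AEMeasurable g)
    (hup : ∀ᵐ z, 0 < P {ω | V ω > g z}) (hlo : ∀ᵐ z, 0 < P {ω | V ω ≤ g z}) (x : ℝ) :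
    phim P V σ g x < ∫ ω, V ω ∂P ∧ ∫ ω, V ω ∂P < phip P V σ g x :=
  ⟨phim_lt_integral hV hσ hg hup hlo x, integral_lt_phip hV hσ hg hup hlo x⟩

/-- If `V` is bounded (with support whose interior is `(m,M)`) and not a.s. constant,
`σ > 0`, and `g` is continuous with values in `(m, M)`, then `φ⁺_g(0) > φ⁻_g(0)`. -/
theorem stmt1 {Ω : Type*} [MeasurableSpace Ω] (P : Measure Ω) [IsProbabilityMeasure P]
    (V : Ω → ℝ) (hVmeas : Measurable V) (hV : Integrable V P)
    (m M : ℝ) (hsupp : SuppIoo P V m M)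
    (hnc : ¬ ∃ c : ℝ, ∀ᵐ ω ∂P, V ω = c)
    (σ : ℝ) (hσ : 0 < σ)
    (g : ℝ → ℝ) (hgc : Continuous g) (hgr : ∀ z, g z ∈ Set.Ioo m M) :
    phim P V σ g 0 < phip P V σ g 0 := by
  obtain ⟨-, -, hup, hlo⟩ := hsupp
  obtain ⟨hlt, hgt⟩ := stmt1_general P V hV σ hσ g hgc.aemeasurable
    (ae_of_all _ fun z ↦ hup _ (hgr z).2) (ae_of_all _ fun z ↦ hlo _ (hgr z).1) 0
  exact hlt.trans hgt
end

section
/- Assume in addition that h is not constant and N ≥ 2. Then F is strictly increasing; moreover g(x) − F(x) = N(N−1)·∫₀¹ (F(x) − F(x·y))·y^{N−1} dy, which is strictly positive for every x > 0 and strictly negative for every x < 0. In particular, if v = F(x*) is the private signal and x* > 0 the aggregate informed demand, then the expected price of the last traded slice, g(x*), strictly exceeds v. -/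
open MeasureTheory Filter Set

/-!
Write `A x = (1/x) ∫₀ˣ g`, so that `p F = g + (p - 1) A` with `p = N`. Strict monotonicity of `F`
and the sign of `g - F = (1 - 1/p) (g - A)` come from strict monotonicity of `g`, which can only
fail if `h` agrees almost everywhere with one of its translates, and this forces a monotone `h` to
be constant. The integral identity is the product rule:
`d/dy (y ^ p * A (x y)) = p y ^ (p-1) F (x y)`, hence `∫₀¹ F (x y) y ^ (p-1) dy = A x / p`, and
`g - F = (p - 1) (F - A)`. The product rule holds off the discontinuities of `g`, which are
countably many because `g` is monotone.
-/

section Translates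

variable {h : ℝ → ℝ}

lemma exists_forall_eq_of_monotone_of_ae_eq_translate (hh : Monotone h) {d : ℝ} (hd : 0 < d)
    (hae : ∀ᵐ z, h (d + z) = h z) : ∃ c, ∀ x, h x = c := by
  have hae_shift (n : ℤ) : ∀ᵐ z : ℝ, h (d + (n * d + z)) = h (n * d + z) :=
    (measurePreserving_add_left volume (n * d)).quasiMeasurePreserving.ae hae
  obtain ⟨z, hz⟩ := (ae_all_iff.2 hae_shift).exists
  have hperiodic : Function.Periodic (fun n : ℤ ↦ h (n * d + z)) 1 := fun n ↦ by
    simp only [← hz n]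
    congr 1
    push_cast
    ring
  have hlattice (n : ℤ) : h (n * d + z) = h z := by simpa using hperiodic.int_mul_eq n
  refine ⟨h z, fun x ↦ le_antisymm ?_ ?_⟩
  · obtain ⟨n, hn⟩ := exists_int_gt ((x - z) / d)
    rw [div_lt_iff₀ hd] at hn
    exact (hh (by linarith)).trans_eq (hlattice n)
  · obtain ⟨n, hn⟩ := exists_int_lt ((x - z) / d)
    rw [lt_div_iff₀ hd] at hn
    exact (hlattice n).symm.trans_le (hh (by linarith))

lemma strictMono_integral_comp_add_left (hh : Monotone h) (hnc : ¬ ∃ c, ∀ x, h x = c)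
    {μ : Measure ℝ} (hμ : volume ≪ μ) (hint : ∀ x, Integrable (fun z ↦ h (x + z)) μ) :
    StrictMono fun x ↦ ∫ z, h (x + z) ∂μ := by
  intro x y hxy
  have hle (z : ℝ) : h (x + z) ≤ h (y + z) := hh (by linarith)
  refine (integral_mono (hint x) (hint y) hle).lt_of_ne fun heq ↦ hnc ?_
  have hae : ∀ᵐ z, h (x + z) = h (y + z) :=
    hμ.ae_le ((integral_eq_iff_of_ae_le (hint x) (hint y) (.of_forall hle)).1 heq)
  refine exists_forall_eq_of_monotone_of_ae_eq_translate hh (sub_pos.2 hxy) ?_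
  filter_upwards [(measurePreserving_add_left volume (-x)).quasiMeasurePreserving.ae hae] with z hz
  rw [add_neg_cancel_left] at hz
  rw [hz]
  congr 1
  ring

lemma integrable_comp_add_left_of_bounded (hmeas : Measurable h) (hbdd : ∃ C, ∀ x, |h x| ≤ C)
    (μ : Measure ℝ) [IsFiniteMeasure μ] (x : ℝ) : Integrable (fun z ↦ h (x + z)) μ := by
  obtain ⟨C, hC⟩ := hbdd
  exact .of_bound (hmeas.comp (measurable_const_add x)).aestronglyMeasurable C
    (.of_forall fun z ↦ hC (x + z))

end Translates

section HardyMean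

variable {g : ℝ → ℝ} {p x y : ℝ}

lemma intervalIntegrable_comp_mul_left_of_monotone (hg : Monotone g) (x a b : ℝ) :
    IntervalIntegrable (fun y ↦ g (x * y)) volume a b := by
  rcases le_total 0 x with hx | hx
  · exact (hg.comp (monotone_mul_left_of_nonneg hx)).intervalIntegrable
  · exact (hg.comp_antitone (antitone_mul_left hx)).intervalIntegrable

/-- The Hardy (running) mean `(1 / x) ∫₀ˣ g` of `g`, rescaled to the unit interval so that its value
at `0` is `g 0`. -/
noncomputable def hardyMean (g : ℝ → ℝ) (x : ℝ) : ℝ := ∫ y in (0 : ℝ)..1, g (x * y)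

lemma hardyMean_zero : hardyMean g 0 = g 0 := by simp [hardyMean]

lemma mul_hardyMean (g : ℝ → ℝ) (x : ℝ) : x * hardyMean g x = ∫ u in (0 : ℝ)..x, g u := by
  rw [hardyMean, intervalIntegral.mul_integral_comp_mul_left, mul_zero, mul_one]

lemma monotone_hardyMean (hg : Monotone g) : Monotone (hardyMean g) := fun x y hxy ↦
  intervalIntegral.integral_mono_on zero_le_one
    (intervalIntegrable_comp_mul_left_of_monotone hg x 0 1)
    (intervalIntegrable_comp_mul_left_of_monotone hg y 0 1)
    fun _ ht ↦ hg (mul_le_mul_of_nonneg_right hxy ht.1)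

lemma hardyMean_lt_self (hg : StrictMono g) (hx : 0 < x) : hardyMean g x < g x := by
  have hint := intervalIntegrable_comp_mul_left_of_monotone hg.monotone x 0 1
  have hpos : 0 < ∫ y in (0 : ℝ)..1, (g x - g (x * y)) :=
    intervalIntegral.intervalIntegral_pos_of_pos_on (intervalIntegrable_const.sub hint)
      (fun y hy ↦ sub_pos.2 (hg (mul_lt_of_lt_one_right hx hy.2))) one_pos
  rw [intervalIntegral.integral_sub intervalIntegrable_const hint] at hpos
  simpa [hardyMean] using hpos

lemma self_lt_hardyMean (hg : StrictMono g) (hx : x < 0) : g x < hardyMean g x := by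
  have hint := intervalIntegrable_comp_mul_left_of_monotone hg.monotone x 0 1
  have hpos : 0 < ∫ y in (0 : ℝ)..1, (g (x * y) - g x) :=
    intervalIntegral.intervalIntegral_pos_of_pos_on (hint.sub intervalIntegrable_const)
      (fun y hy ↦ sub_pos.2 (hg (lt_mul_of_lt_one_right hx hy.2))) one_pos
  rw [intervalIntegral.integral_sub hint intervalIntegrable_const] at hpos
  simpa [hardyMean] using hpos

/-- The mixture of `g` and its Hardy mean with weights `1 / p` and `(p - 1) / p`. It is the
function `F` of the theorem for `p = N`. -/
noncomputable def hardyMix (p : ℝ) (g : ℝ → ℝ) (x : ℝ) : ℝ := (g x + (p - 1) * hardyMean g x) / p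

lemma hardyMix_zero (hp : p ≠ 0) : hardyMix p g 0 = g 0 := by
  rw [hardyMix, hardyMean_zero]
  field_simp
  ring

lemma hardyMix_of_ne_zero (hx : x ≠ 0) :
    hardyMix p g x = g x / p + (p - 1) / (p * x) * ∫ u in (0 : ℝ)..x, g u := by
  rw [hardyMix, ← mul_hardyMean]
  field_simp

lemma monotone_hardyMix (hp : 1 ≤ p) (hg : Monotone g) : Monotone (hardyMix p g) :=
  (hg.add ((monotone_hardyMean hg).const_mul (sub_nonneg.2 hp))).div_const (by positivity)

lemma strictMono_hardyMix (hp : 1 ≤ p) (hg : StrictMono g) : StrictMono (hardyMix p g) :=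
  (hg.add_monotone ((monotone_hardyMean hg.monotone).const_mul (sub_nonneg.2 hp))).div_const
    (by positivity)

lemma self_sub_hardyMix (hp : p ≠ 0) :
    g x - hardyMix p g x = (p - 1) / p * (g x - hardyMean g x) := by
  rw [hardyMix]
  field_simp
  ring

lemma hardyMix_lt_self (hp : 1 < p) (hg : StrictMono g) (hx : 0 < x) : hardyMix p g x < g x := by
  have hp₀ : 0 < p := one_pos.trans hp
  rw [← sub_pos, self_sub_hardyMix hp₀.ne']
  exact mul_pos (div_pos (sub_pos.2 hp) hp₀) (sub_pos.2 (hardyMean_lt_self hg hx))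

lemma self_lt_hardyMix (hp : 1 < p) (hg : StrictMono g) (hx : x < 0) : g x < hardyMix p g x := by
  have hp₀ : 0 < p := one_pos.trans hp
  rw [← sub_neg, self_sub_hardyMix hp₀.ne']
  exact mul_neg_of_pos_of_neg (div_pos (sub_pos.2 hp) hp₀) (sub_neg.2 (self_lt_hardyMean hg hx))

lemma hasDerivAt_rpow_mul_primitive (hp : p ≠ 0) (hg : Monotone g) (hy : 0 < y)
    (hcont : ContinuousAt g (x * y)) :
    HasDerivAt (fun y ↦ y ^ (p - 1) * ∫ u in (0 : ℝ)..x * y, g u)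
      (p * x * (hardyMix p g (x * y) * y ^ (p - 1))) y := by
  have hprimitive : HasDerivAt (fun t ↦ ∫ u in (0 : ℝ)..t, g u) (g (x * y)) (x * y) :=
    intervalIntegral.integral_hasDerivAt_right hg.intervalIntegrable
      hg.measurable.stronglyMeasurable.stronglyMeasurableAtFilter hcont
  have hcomp : HasDerivAt (fun y ↦ ∫ u in (0 : ℝ)..x * y, g u) (g (x * y) * x) y := by
    simpa [Function.comp_def] using hprimitive.comp y (hasDerivAt_const_mul x)
  refine ((Real.hasDerivAt_rpow_const (.inl hy.ne')).mul hcomp).congr_deriv ?_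
  rw [← mul_hardyMean, hardyMix, Real.rpow_sub_one hy.ne' (p - 1)]
  field_simp
  ring

lemma integral_rpow_sub_one (hp : 0 < p) : ∫ y in (0 : ℝ)..1, y ^ (p - 1) = 1 / p := by
  simp [integral_rpow (.inl (by linarith : -1 < p - 1)), hp.ne']

lemma intervalIntegrable_hardyMix_mul_rpow (hp : 1 ≤ p) (hg : Monotone g) (x a b : ℝ) :
    IntervalIntegrable (fun y ↦ hardyMix p g (x * y) * y ^ (p - 1)) volume a b :=
  (intervalIntegrable_comp_mul_left_of_monotone (monotone_hardyMix hp hg) x a b).mul_continuousOn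
    (Real.continuous_rpow_const (sub_nonneg.2 hp)).continuousOn

lemma integral_hardyMix_mul_rpow (hp : 1 ≤ p) (hg : Monotone g) (x : ℝ) :
    ∫ y in (0 : ℝ)..1, hardyMix p g (x * y) * y ^ (p - 1) = hardyMean g x / p := by
  have hp₀ : 0 < p := one_pos.trans_le hp
  have hrpow : Continuous fun y : ℝ ↦ y ^ (p - 1) := Real.continuous_rpow_const (sub_nonneg.2 hp)
  rcases eq_or_ne x 0 with rfl | hx
  · simp only [zero_mul, hardyMix_zero hp₀.ne', hardyMean_zero, intervalIntegral.integral_const_mul,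
      integral_rpow_sub_one hp₀, mul_one_div]
  have hdisc : {y | ¬ ContinuousAt g (x * y)}.Countable :=
    hg.countable_not_continuousAt.preimage (mul_right_injective₀ hx)
  have hprimitive : Continuous fun y ↦ ∫ u in (0 : ℝ)..x * y, g u :=
    (intervalIntegral.continuous_primitive (fun _ _ ↦ hg.intervalIntegrable) 0).comp
      (continuous_const_mul x)
  have hFTC := integral_eq_of_hasDerivAt_off_countable_of_le _ _ zero_le_one hdisc
    (hrpow.mul hprimitive).continuousOn
    (fun y hy ↦ hasDerivAt_rpow_mul_primitive hp₀.ne' hg hy.1.1 (not_not.1 hy.2))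
    ((intervalIntegrable_hardyMix_mul_rpow hp hg x 0 1).const_mul (p * x))
  simp only [Pi.mul_apply, intervalIntegral.integral_const_mul, mul_one, mul_zero, Real.one_rpow,
    one_mul, intervalIntegral.integral_same, sub_zero, ← mul_hardyMean g x] at hFTC
  rw [eq_div_iff hp₀.ne']
  apply mul_left_cancel₀ hx
  linear_combination hFTC

lemma self_sub_hardyMix_eq_integral (hp : 1 ≤ p) (hg : Monotone g) (x : ℝ) :
    g x - hardyMix p g x =
      p * (p - 1) * ∫ y in (0 : ℝ)..1, (hardyMix p g x - hardyMix p g (x * y)) * y ^ (p - 1) := by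
  have hp₀ : 0 < p := one_pos.trans_le hp
  have hrpow : Continuous fun y : ℝ ↦ y ^ (p - 1) := Real.continuous_rpow_const (sub_nonneg.2 hp)
  have hsplit : ∫ y in (0 : ℝ)..1, (hardyMix p g x - hardyMix p g (x * y)) * y ^ (p - 1) =
      (hardyMix p g x - hardyMean g x) / p := by
    simp only [sub_mul]
    rw [intervalIntegral.integral_sub ((hrpow.intervalIntegrable 0 1).const_mul _)
        (intervalIntegrable_hardyMix_mul_rpow hp hg x 0 1), intervalIntegral.integral_const_mul,
      integral_rpow_sub_one hp₀, integral_hardyMix_mul_rpow hp hg]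
    ring
  rw [hsplit, hardyMix]
  field_simp
  ring

end HardyMean

lemma gq_eq_gaussianPDFReal {σ : ℝ} (hσ : 0 ≤ σ) (z : ℝ) :
    gq σ z = ProbabilityTheory.gaussianPDFReal 0 (σ.toNNReal ^ 2) z := by
  rw [gq, ProbabilityTheory.gaussianPDFReal, NNReal.coe_pow, Real.coe_toNNReal σ hσ,
    Real.sqrt_mul' _ (sq_nonneg σ), Real.sqrt_sq hσ, sub_zero, mul_comm σ, div_eq_inv_mul]

lemma integral_mul_gq_eq_integral_gaussianReal {σ : ℝ} (hσ : 0 < σ) (f : ℝ → ℝ) :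
    ∫ z, f z * gq σ z = ∫ z, f z ∂ProbabilityTheory.gaussianReal 0 (σ.toNNReal ^ 2) := by
  rw [ProbabilityTheory.integral_gaussianReal_eq_integral_smul (by simpa using hσ)]
  simp only [gq_eq_gaussianPDFReal hσ.le, smul_eq_mul, mul_comm]

theorem stmt4_general {h : ℝ → ℝ} (hh : Monotone h) (hnc : ¬ ∃ c, ∀ x, h x = c)
    {μ : Measure ℝ} (hμ : volume ≪ μ) (hint : ∀ x, Integrable (fun z ↦ h (x + z)) μ)
    {p : ℝ} (hp : 1 < p) {g F : ℝ → ℝ} (hg : ∀ x, g x = ∫ z, h (x + z) ∂μ) (hF0 : F 0 = g 0)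
    (hF : ∀ x, x ≠ 0 → F x = g x / p + (p - 1) / (p * x) * ∫ u in (0 : ℝ)..x, g u) :
    StrictMono F ∧
    (∀ x, g x - F x = p * (p - 1) * ∫ y in (0 : ℝ)..1, (F x - F (x * y)) * y ^ (p - 1)) ∧
    (∀ x, 0 < x → 0 < p * (p - 1) * ∫ y in (0 : ℝ)..1, (F x - F (x * y)) * y ^ (p - 1)) ∧
    (∀ x, x < 0 → p * (p - 1) * (∫ y in (0 : ℝ)..1, (F x - F (x * y)) * y ^ (p - 1)) < 0) ∧
    (∀ x, 0 < x → F x < g x) ∧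
    (∀ x, x < 0 → g x < F x) := by
  have hg_strict : StrictMono g := by
    simpa only [← hg] using strictMono_integral_comp_add_left hh hnc hμ hint
  obtain rfl : F = hardyMix p g := by
    ext x
    rcases eq_or_ne x 0 with rfl | hx
    · rw [hF0, hardyMix_zero (one_pos.trans hp).ne']
    · rw [hF x hx, hardyMix_of_ne_zero hx]
  have hidentity := self_sub_hardyMix_eq_integral hp.le hg_strict.monotone
  refine ⟨strictMono_hardyMix hp.le hg_strict, hidentity, fun x hx ↦ ?_, fun x hx ↦ ?_,
    fun x ↦ hardyMix_lt_self hp hg_strict, fun x ↦ self_lt_hardyMix hp hg_strict⟩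
  · exact hidentity x ▸ sub_pos.2 (hardyMix_lt_self hp hg_strict hx)
  · exact hidentity x ▸ sub_neg.2 (self_lt_hardyMix hp hg_strict hx)

/-- With `h` moreover not constant and `N ≥ 2`, `F` is strictly increasing,
`g(x) − F(x) = N(N−1)∫₀¹ (F(x) − F(xy)) y^{N−1} dy`, which is `> 0` for `x > 0` and `< 0` for
`x < 0`; in particular `F(x*) < g(x*)` for `x* > 0` (the last slice trades above the signal)
and `g(x*) < F(x*)` for `x* < 0`. -/
theorem stmt4 (σ : ℝ) (hσ : 0 < σ) (N : ℕ) (hN : 2 ≤ N)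
    (h : ℝ → ℝ) (hmeas : Measurable h) (hmono : Monotone h) (hbdd : ∃ C, ∀ x, |h x| ≤ C)
    (hnc : ¬ ∃ c : ℝ, ∀ x, h x = c)
    (g F : ℝ → ℝ)
    (hg : ∀ x, g x = ∫ z, h (x + z) * gq σ z)
    (hF0 : F 0 = g 0)
    (hF : ∀ x : ℝ, x ≠ 0 → F x = g x / N + (((N:ℝ) - 1) / (N * x)) * ∫ u in (0:ℝ)..x, g u) :
    StrictMono F ∧
    (∀ x : ℝ, g x - F x = N * ((N:ℝ) - 1) * ∫ y in (0:ℝ)..1, (F x - F (x * y)) * y ^ (N - 1)) ∧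
    (∀ x : ℝ, 0 < x →
      0 < N * ((N:ℝ) - 1) * ∫ y in (0:ℝ)..1, (F x - F (x * y)) * y ^ (N - 1)) ∧
    (∀ x : ℝ, x < 0 →
      N * ((N:ℝ) - 1) * (∫ y in (0:ℝ)..1, (F x - F (x * y)) * y ^ (N - 1)) < 0) ∧
    (∀ x : ℝ, 0 < x → F x < g x) ∧
    (∀ x : ℝ, x < 0 → g x < F x) := by
  simpa only [← Nat.cast_pred (R := ℝ) (zero_lt_two.trans_le hN), Real.rpow_natCast] using
    stmt4_general hmono hnc
      (ProbabilityTheory.gaussianReal_absolutelyContinuous' 0 (by simpa using hσ))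
      (integrable_comp_add_left_of_bounded hmeas hbdd _) (Nat.one_lt_cast.2 hN)
      (fun x ↦ (hg x).trans (integral_mul_gq_eq_integral_gaussianReal hσ _)) hF0 hF
end

section
/- The expected aggregate profit of the liquidity suppliers is zero: E[∫₀^Y (h(y) − V) dy] = 0, equivalently E[∫₀^Y h(y) dy] = E[V·Y]. -/
open MeasureTheory Filter Set

/-!
Consider the region of pairs `(ω, y)` for which the quote at `y` is executed in state `ω`, that is,
`y` lies between `0` and the total demand `Y ω`. Its fibre over a quantity `y > 0` is `{Y ≥ y}` and
over `y < 0` it is `{Y ≤ y}`, so the definition of `h` says that `h y - V` has mean zero over almost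
every such fibre: each single quote breaks even. The aggregate profit is the integral of `h y - V`
over the region, signed by `y`, so integrating in `ω` first shows that it vanishes. Fubini's theorem
applies because `|h y| P(Y ≥ y) ≤ E[|V|; Y ≥ y]`, whose integral over `y > 0` is `E[|V| Y⁺] < ∞`
(and likewise for `y < 0`).
-/

section Fibres

variable {α β E : Type*} [MeasurableSpace α] [MeasurableSpace β] [NormedAddCommGroup E]
  {μ : Measure α} {ν : Measure β} {T : Set (α × β)} {f : α × β → E}

lemma ae_integrableOn_fibre_fst [SFinite ν] (hT : MeasurableSet T)
    (hf : IntegrableOn f T (μ.prod ν)) :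
    ∀ᵐ x ∂μ, IntegrableOn (fun y => f (x, y)) {y | (x, y) ∈ T} ν := by
  have hind := hf.integrable_indicator hT
  filter_upwards [((integrable_prod_iff hind.1).1 hind).1] with x hx
  exact (integrable_indicator_iff (measurable_prodMk_left hT)).1 hx

lemma ae_integrableOn_fibre_snd [SFinite μ] [SFinite ν] (hT : MeasurableSet T)
    (hf : IntegrableOn f T (μ.prod ν)) :
    ∀ᵐ y ∂ν, IntegrableOn (fun x => f (x, y)) {x | (x, y) ∈ T} μ := by
  filter_upwards [(hf.integrable_indicator hT).prod_left_ae] with y hy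
  exact (integrable_indicator_iff (measurable_prodMk_right hT)).1 hy

lemma ae_restrict_measure_fibre_fst_ne_zero [SFinite ν] (hT : MeasurableSet T) :
    ∀ᵐ p ∂(μ.prod ν).restrict T, ν {y | (p.1, y) ∈ T} ≠ 0 := by
  have hmeas : MeasurableSet {p : α × β | ν {y | (p.1, y) ∈ T} = 0} :=
    ((measurable_measure_prodMk_left hT).comp measurable_fst) (measurableSet_singleton 0)
  rw [ae_restrict_iff' hT]
  refine (Measure.ae_prod_iff_ae_ae (hT.imp hmeas.compl)).2 (.of_forall fun x => ?_)
  by_cases hx : ν {y | (x, y) ∈ T} = 0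
  · filter_upwards [measure_eq_zero_iff_ae_notMem.1 hx] with y hy hyT using absurd hyT hy
  · exact .of_forall fun _ _ => hx

variable [NormedSpace ℝ E]

lemma integrable_setIntegral_fibre_fst [SFinite ν] (hT : MeasurableSet T)
    (hf : IntegrableOn f T (μ.prod ν)) :
    Integrable (fun x => ∫ y in {y | (x, y) ∈ T}, f (x, y) ∂ν) μ :=
  (hf.integrable_indicator hT).integral_prod_left.congr <|
    .of_forall fun _ => integral_indicator (measurable_prodMk_left hT)

lemma integrable_setIntegral_fibre_snd [SFinite μ] [SFinite ν] (hT : MeasurableSet T)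
    (hf : IntegrableOn f T (μ.prod ν)) :
    Integrable (fun y => ∫ x in {x | (x, y) ∈ T}, f (x, y) ∂μ) ν :=
  (hf.integrable_indicator hT).integral_prod_right.congr <|
    .of_forall fun _ => integral_indicator (measurable_prodMk_right hT)

lemma setIntegral_prod_eq_integral_fibre_fst [SFinite μ] [SFinite ν] (hT : MeasurableSet T)
    (hf : IntegrableOn f T (μ.prod ν)) :
    ∫ p in T, f p ∂μ.prod ν = ∫ x, ∫ y in {y | (x, y) ∈ T}, f (x, y) ∂ν ∂μ := by
  rw [← integral_indicator hT, integral_prod _ (hf.integrable_indicator hT)]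
  exact integral_congr_ae (.of_forall fun _ => integral_indicator (measurable_prodMk_left hT))

lemma setIntegral_prod_eq_integral_fibre_snd [SFinite μ] [SFinite ν] (hT : MeasurableSet T)
    (hf : IntegrableOn f T (μ.prod ν)) :
    ∫ p in T, f p ∂μ.prod ν = ∫ y, ∫ x in {x | (x, y) ∈ T}, f (x, y) ∂μ ∂ν := by
  rw [← integral_indicator hT, integral_prod_symm _ (hf.integrable_indicator hT)]
  exact integral_congr_ae (.of_forall fun _ => integral_indicator (measurable_prodMk_right hT))

lemma aestronglyMeasurable_restrict_of_measureReal_fibre_smul [SFinite ν]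
    (hT : MeasurableSet T) (hfin : ∀ x, ν {y | (x, y) ∈ T} ≠ ⊤) {g : α → E}
    (hg : AEStronglyMeasurable (fun x => ν.real {y | (x, y) ∈ T} • g x) μ) :
    AEStronglyMeasurable (fun p => g p.1) ((μ.prod ν).restrict T) := by
  have hinv : Measurable fun x => (ν.real {y | (x, y) ∈ T})⁻¹ :=
    (measurable_measure_prodMk_left hT).ennreal_toReal.inv
  refine ((hinv.aestronglyMeasurable.smul hg).comp_fst (ν := ν)).restrict.congr ?_
  filter_upwards [ae_restrict_measure_fibre_fst_ne_zero hT] with p hp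
  exact inv_smul_smul₀ (ENNReal.toReal_ne_zero.2 ⟨hp, hfin p.1⟩) (g p.1)

lemma integrableOn_comp_fst_of_measureReal_fibre_smul [SFinite ν]
    (hT : MeasurableSet T) (hfin : ∀ x, ν {y | (x, y) ∈ T} ≠ ⊤) {g : α → E}
    (hg : Integrable (fun x => ν.real {y | (x, y) ∈ T} • g x) μ) :
    IntegrableOn (fun p => g p.1) T (μ.prod ν) := by
  have hfibre (x : α) : MeasurableSet {y | (x, y) ∈ T} := measurable_prodMk_left hT
  have hmeas := aestronglyMeasurable_restrict_of_measureReal_fibre_smul hT hfin hg.1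
  rw [← integrable_indicator_iff hT,
    integrable_prod_iff ((aestronglyMeasurable_indicator_iff hT).2 hmeas)]
  refine ⟨.of_forall fun x => ?_, hg.norm.congr (.of_forall fun x => ?_)⟩
  · exact (integrable_indicator_iff (hfibre x)).2 (integrableOn_const (C := g x) (hfin x))
  · calc ‖ν.real {y | (x, y) ∈ T} • g x‖
        = ∫ _ in {y | (x, y) ∈ T}, ‖g x‖ ∂ν := by
          rw [setIntegral_const, norm_smul, Real.norm_of_nonneg measureReal_nonneg, smul_eq_mul]
      _ = ∫ y, {y | (x, y) ∈ T}.indicator (fun _ => ‖g x‖) y ∂ν :=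
          (integral_indicator (hfibre x)).symm
      _ = ∫ y, ‖T.indicator (fun p => g p.1) (x, y)‖ ∂ν := by
          simp only [norm_indicator_eq_indicator_norm]; rfl

lemma integrableOn_comp_snd_of_measureReal_fibre_smul [SFinite μ] [SFinite ν]
    (hT : MeasurableSet T) (hfin : ∀ y, μ {x | (x, y) ∈ T} ≠ ⊤) {g : β → E}
    (hg : Integrable (fun y => μ.real {x | (x, y) ∈ T} • g y) ν) :
    IntegrableOn (fun p => g p.2) T (μ.prod ν) :=
  (Measure.measurePreserving_swap.integrableOn_comp_preimage
    MeasurableEquiv.prodComm.measurableEmbedding).1 <|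
    integrableOn_comp_fst_of_measureReal_fibre_smul (measurable_swap hT) hfin hg

end Fibres

lemma measurable_real_sign : Measurable Real.sign :=
  Measurable.ite measurableSet_Iio measurable_const
    (Measurable.ite measurableSet_Ioi measurable_const measurable_const)

lemma norm_real_sign_le_one (x : ℝ) : ‖Real.sign x‖ ≤ 1 := by
  rcases Real.sign_apply_eq x with hx | hx | hx <;> simp [hx]

lemma real_sign_mul_self (x : ℝ) : Real.sign x * x = |x| := by
  rcases lt_trichotomy x 0 with hx | rfl | hx
  · rw [Real.sign_of_neg hx, abs_of_neg hx, neg_one_mul]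
  · rw [mul_zero, abs_zero]
  · rw [Real.sign_of_pos hx, abs_of_pos hx, one_mul]

lemma intervalIntegral_zero_eq_setIntegral_uIcc_sign_smul {E : Type*} [NormedAddCommGroup E]
    [NormedSpace ℝ E] (f : ℝ → E) (b : ℝ) :
    ∫ y in (0 : ℝ)..b, f y = ∫ y in uIcc 0 b, Real.sign y • f y := by
  rcases le_total 0 b with hb | hb
  · rw [intervalIntegral.integral_of_le hb, uIcc_of_le hb, integral_Icc_eq_integral_Ioc]
    exact setIntegral_congr_fun measurableSet_Ioc fun y hy => by
      simp only [Real.sign_of_pos hy.1, one_smul]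
  · rw [intervalIntegral.integral_of_ge hb, uIcc_of_ge hb, ← integral_neg,
      ← integral_Icc_eq_integral_Ioc, integral_Icc_eq_integral_Ico, integral_Icc_eq_integral_Ico]
    exact setIntegral_congr_fun measurableSet_Ico fun y hy => by
      simp only [Real.sign_of_neg hy.2, neg_smul, one_smul]

/-- The pairs `(ω, y)` such that the quote at quantity `y` is executed in state `ω` when the total
demand is `Y`. The interval is closed so that the states in which a quote `y > 0` is executed are
exactly `{Y ≥ y}`, and those for `y < 0` exactly `{Y ≤ y}`. -/
def executionRegion {Ω : Type*} (Y : Ω → ℝ) : Set (Ω × ℝ) :=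
  {p | p.2 ∈ uIcc 0 (Y p.1)}

namespace executionRegion

variable {Ω : Type*} {Y : Ω → ℝ}

lemma fibre_of_pos {y : ℝ} (hy : 0 < y) : {ω | (ω, y) ∈ executionRegion Y} = {ω | Y ω ≥ y} := by
  ext ω
  simp [executionRegion, mem_uIcc, hy.le, hy.not_ge]

lemma fibre_of_neg {y : ℝ} (hy : y < 0) : {ω | (ω, y) ∈ executionRegion Y} = {ω | Y ω ≤ y} := by
  ext ω
  simp [executionRegion, mem_uIcc, hy.le, hy.not_ge]

variable [MeasurableSpace Ω] {P : Measure Ω}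

lemma measurableSet (hY : Measurable Y) : MeasurableSet (executionRegion Y) :=
  have hY₁ : Measurable fun p : Ω × ℝ => Y p.1 := hY.comp measurable_fst
  (measurableSet_le (measurable_const.min hY₁) measurable_snd).inter
    (measurableSet_le measurable_snd (measurable_const.max hY₁))

lemma integrableOn_comp_fst (hY : Measurable Y) {V : Ω → ℝ}
    (hVY : Integrable (fun ω => V ω * Y ω) P) :
    IntegrableOn (fun p => V p.1) (executionRegion Y) (P.prod volume) := by
  have hlength (ω : Ω) : volume.real {y | (ω, y) ∈ executionRegion Y} = |Y ω| := by
    simp [executionRegion, Measure.real]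
  refine integrableOn_comp_fst_of_measureReal_fibre_smul (measurableSet hY)
    (fun ω => (isCompact_uIcc (a := 0) (b := Y ω)).measure_ne_top) ?_
  refine (hVY.bdd_mul (measurable_real_sign.comp hY).aestronglyMeasurable
    (.of_forall fun ω => norm_real_sign_le_one (Y ω))).congr (.of_forall fun ω => ?_)
  calc Real.sign (Y ω) * (V ω * Y ω)
      = Real.sign (Y ω) * Y ω * V ω := by ring
    _ = volume.real {y | (ω, y) ∈ executionRegion Y} • V ω := by
      rw [real_sign_mul_self, hlength, smul_eq_mul]

section Fubini

variable {E : Type*} [NormedAddCommGroup E] {f : Ω × ℝ → E}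

lemma ae_intervalIntegrable (hY : Measurable Y)
    (hf : IntegrableOn f (executionRegion Y) (P.prod volume)) :
    ∀ᵐ ω ∂P, IntervalIntegrable (fun y => f (ω, y)) volume 0 (Y ω) := by
  filter_upwards [ae_integrableOn_fibre_fst (measurableSet hY) hf] with ω hω
  exact IntegrableOn.intervalIntegrable hω

variable [NormedSpace ℝ E]

lemma integrableOn_sign_smul (hf : IntegrableOn f (executionRegion Y) (P.prod volume)) :
    IntegrableOn (fun p => Real.sign p.2 • f p) (executionRegion Y) (P.prod volume) :=
  hf.bdd_smul 1 (measurable_real_sign.comp measurable_snd).aestronglyMeasurable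
    (.of_forall fun p => norm_real_sign_le_one p.2)

lemma integrable_intervalIntegral (hY : Measurable Y)
    (hf : IntegrableOn f (executionRegion Y) (P.prod volume)) :
    Integrable (fun ω => ∫ y in (0 : ℝ)..(Y ω), f (ω, y)) P := by
  simp only [intervalIntegral_zero_eq_setIntegral_uIcc_sign_smul]
  exact integrable_setIntegral_fibre_fst (measurableSet hY) (integrableOn_sign_smul hf)

lemma integral_intervalIntegral_eq_setIntegral [SFinite P] (hY : Measurable Y)
    (hf : IntegrableOn f (executionRegion Y) (P.prod volume)) :
    ∫ ω, (∫ y in (0 : ℝ)..(Y ω), f (ω, y)) ∂P =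
      ∫ p in executionRegion Y, Real.sign p.2 • f p ∂P.prod volume := by
  simp only [intervalIntegral_zero_eq_setIntegral_uIcc_sign_smul]
  exact (setIntegral_prod_eq_integral_fibre_fst (measurableSet hY)
    (integrableOn_sign_smul hf)).symm

lemma integral_intervalIntegral_eq_zero [SFinite P] (hY : Measurable Y)
    (hf : IntegrableOn f (executionRegion Y) (P.prod volume))
    (hzero : ∀ᵐ y, ∫ ω in {ω | (ω, y) ∈ executionRegion Y}, f (ω, y) ∂P = 0) :
    ∫ ω, (∫ y in (0 : ℝ)..(Y ω), f (ω, y)) ∂P = 0 := by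
  rw [integral_intervalIntegral_eq_setIntegral hY hf,
    setIntegral_prod_eq_integral_fibre_snd (measurableSet hY) (integrableOn_sign_smul hf)]
  refine integral_eq_zero_of_ae ?_
  filter_upwards [hzero] with y hy
  simp only [integral_smul, hy, smul_zero, Pi.zero_apply]

end Fubini

end executionRegion

section Book

variable {Ω : Type*} [MeasurableSpace Ω] {P : Measure Ω} {V Y : Ω → ℝ} {h : ℝ → ℝ}

lemma integral_executed_profit_eq_sub (hY : Measurable Y)
    (hVY : Integrable (fun ω => V ω * Y ω) P)
    (hh : IntegrableOn (fun p => h p.2) (executionRegion Y) (P.prod volume)) :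
    ∫ ω, (∫ y in (0 : ℝ)..(Y ω), (h y - V ω)) ∂P =
      (∫ ω, (∫ y in (0 : ℝ)..(Y ω), h y) ∂P) - ∫ ω, V ω * Y ω ∂P := by
  rw [← integral_sub (executionRegion.integrable_intervalIntegral hY hh) hVY]
  refine integral_congr_ae ?_
  filter_upwards [executionRegion.ae_intervalIntegrable hY hh] with ω hω
  rw [intervalIntegral.integral_sub hω intervalIntegrable_const, intervalIntegral.integral_const,
    sub_zero, smul_eq_mul, mul_comm]

variable [IsFiniteMeasure P]

lemma measureReal_mul_eq_setIntegral_of_eq_div {s : Set Ω} {c : ℝ}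
    (hc : P s ≠ 0 → c = (∫ ω in s, V ω ∂P) / (P s).toReal) :
    P.real s * c = ∫ ω in s, V ω ∂P := by
  by_cases hs : P s = 0
  · simp [Measure.real, hs, setIntegral_measure_zero]
  · rw [hc hs]
    exact mul_div_cancel₀ _ (ENNReal.toReal_ne_zero.2 ⟨hs, measure_ne_top P s⟩)

lemma ae_measureReal_fibre_mul_eq_setIntegral
    (hhp : ∀ y : ℝ, 0 < y → P {ω | Y ω ≥ y} ≠ 0 →
      h y = (∫ ω in {ω | Y ω ≥ y}, V ω ∂P) / (P {ω | Y ω ≥ y}).toReal)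
    (hhm : ∀ y : ℝ, y < 0 → P {ω | Y ω ≤ y} ≠ 0 →
      h y = (∫ ω in {ω | Y ω ≤ y}, V ω ∂P) / (P {ω | Y ω ≤ y}).toReal) :
    ∀ᵐ y, P.real {ω | (ω, y) ∈ executionRegion Y} * h y =
      ∫ ω in {ω | (ω, y) ∈ executionRegion Y}, V ω ∂P := by
  filter_upwards [Measure.ae_ne volume 0] with y hy
  rcases hy.lt_or_gt with hneg | hpos
  · rw [executionRegion.fibre_of_neg hneg]
    exact measureReal_mul_eq_setIntegral_of_eq_div (hhm y hneg)
  · rw [executionRegion.fibre_of_pos hpos]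
    exact measureReal_mul_eq_setIntegral_of_eq_div (hhp y hpos)

lemma integrableOn_executionRegion_book (hY : Measurable Y)
    (hVY : Integrable (fun ω => V ω * Y ω) P)
    (hfair : ∀ᵐ y, P.real {ω | (ω, y) ∈ executionRegion Y} * h y =
      ∫ ω in {ω | (ω, y) ∈ executionRegion Y}, V ω ∂P) :
    IntegrableOn (fun p => h p.2) (executionRegion Y) (P.prod volume) := by
  have hR := executionRegion.measurableSet hY
  have hV := executionRegion.integrableOn_comp_fst hY hVY
  refine integrableOn_comp_snd_of_measureReal_fibre_smul hR (fun y => measure_ne_top P _) ?_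
  exact (integrable_setIntegral_fibre_snd hR hV).congr (EventuallyEq.symm hfair)

lemma integral_executed_profit_eq_zero (hY : Measurable Y)
    (hVY : Integrable (fun ω => V ω * Y ω) P)
    (hfair : ∀ᵐ y, P.real {ω | (ω, y) ∈ executionRegion Y} * h y =
      ∫ ω in {ω | (ω, y) ∈ executionRegion Y}, V ω ∂P) :
    ∫ ω, (∫ y in (0 : ℝ)..(Y ω), (h y - V ω)) ∂P = 0 := by
  have hV := executionRegion.integrableOn_comp_fst hY hVY
  have hh := integrableOn_executionRegion_book hY hVY hfair
  refine executionRegion.integral_intervalIntegral_eq_zero hY (hh.sub hV) ?_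
  filter_upwards [hfair, ae_integrableOn_fibre_snd (executionRegion.measurableSet hY) hV]
    with y hy hVy
  calc ∫ ω in {ω | (ω, y) ∈ executionRegion Y}, (h y - V ω) ∂P
      = P.real {ω | (ω, y) ∈ executionRegion Y} * h y -
          ∫ ω in {ω | (ω, y) ∈ executionRegion Y}, V ω ∂P := by
        rw [integral_sub (integrable_const _) hVy, setIntegral_const, smul_eq_mul]
    _ = 0 := sub_eq_zero.2 hy

end Book

theorem stmt6_general {Ω : Type*} [MeasurableSpace Ω] (P : Measure Ω) [IsFiniteMeasure P]
    (V Y : Ω → ℝ) (hY : Measurable Y) (hVY : Integrable (fun ω => V ω * Y ω) P) (h : ℝ → ℝ)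
    (hhp : ∀ y : ℝ, 0 < y → P {ω | Y ω ≥ y} ≠ 0 →
      h y = (∫ ω in {ω | Y ω ≥ y}, V ω ∂P) / (P {ω | Y ω ≥ y}).toReal)
    (hhm : ∀ y : ℝ, y < 0 → P {ω | Y ω ≤ y} ≠ 0 →
      h y = (∫ ω in {ω | Y ω ≤ y}, V ω ∂P) / (P {ω | Y ω ≤ y}).toReal) :
    (∀ᵐ ω ∂P, IntervalIntegrable h volume 0 (Y ω)) ∧
    Integrable (fun ω => ∫ y in (0 : ℝ)..(Y ω), h y) P ∧
    (∫ ω, (∫ y in (0 : ℝ)..(Y ω), (h y - V ω)) ∂P) = 0 ∧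
    (∫ ω, (∫ y in (0 : ℝ)..(Y ω), h y) ∂P) = ∫ ω, V ω * Y ω ∂P := by
  have hfair := ae_measureReal_fibre_mul_eq_setIntegral hhp hhm
  have hh := integrableOn_executionRegion_book hY hVY hfair
  have hprofit := integral_executed_profit_eq_zero hY hVY hfair
  refine ⟨executionRegion.ae_intervalIntegrable hY hh,
    executionRegion.integrable_intervalIntegral hY hh, hprofit, ?_⟩
  rwa [integral_executed_profit_eq_sub hY hVY hh, sub_eq_zero] at hprofit

/-- With the book `h` given by tail expectations of `V` given the total demand `Y`,
the expected aggregate profit of the liquidity suppliers vanishes: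
`E[∫₀^Y (h(y) − V) dy] = 0`, equivalently `E[∫₀^Y h(y) dy] = E[V·Y]`. -/
theorem stmt6 {Ω : Type*} [MeasurableSpace Ω] (P : Measure Ω) [IsProbabilityMeasure P]
    (V Y : Ω → ℝ) (hVmeas : Measurable V) (hYmeas : Measurable Y)
    (hV : Integrable V P) (hVY : Integrable (fun ω => V ω * Y ω) P)
    (hpos : ∀ y : ℝ, 0 < y → 0 < P {ω | Y ω ≥ y})
    (hneg : ∀ y : ℝ, y < 0 → 0 < P {ω | Y ω ≤ y})
    (h : ℝ → ℝ)
    (hhp : ∀ y : ℝ, 0 < y →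
      h y = (∫ ω in {ω | Y ω ≥ y}, V ω ∂P) / (P {ω | Y ω ≥ y}).toReal)
    (hhm : ∀ y : ℝ, y < 0 →
      h y = (∫ ω in {ω | Y ω ≤ y}, V ω ∂P) / (P {ω | Y ω ≤ y}).toReal)
    (hint : Integrable (fun ω => ∫ u in (0:ℝ)..|Y ω|, |h (Real.sign (Y ω) * u)|) P) :
    (∫ ω, (∫ y in (0:ℝ)..(Y ω), (h y - V ω)) ∂P) = 0 ∧
    (∫ ω, (∫ y in (0:ℝ)..(Y ω), h y) ∂P) = ∫ ω, V ω * Y ω ∂P :=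
  (stmt6_general P V Y hYmeas hVY h (fun y hy _ => hhp y hy) (fun y hy _ => hhm y hy)).2.2
end

section
/- Let N ≥ 1 and suppose F₁ : ℝ → (m, M) is a continuous nondecreasing solution of equation (E) with parameter σ = 1. Then for every σ > 0 the function x ↦ F₁(x/σ) is a solution of equation (E) with parameter σ (where both the Gaussian kernels and the maps φ are taken with the same parameter σ). -/
open MeasureTheory Filter Set

/-
Everything follows from the scaling `q(sσ, z) = s⁻¹ q(σ, z/s)` of the Gaussian density, which the
averaged kernel inherits. The substitution `z ↦ z/s` shows first that `φ` commutes with the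
dilation, and then that equation (E) at `x` with parameter `sσ` is equation (E) at `x/s` with
parameter `σ`.
-/

lemma gq_mul (s σ z : ℝ) : gq (s * σ) z = s⁻¹ * gq σ (z / s) := by
  have exponent_eq : -(z ^ 2) / (2 * (s * σ) ^ 2) = -((z / s) ^ 2) / (2 * σ ^ 2) := by ring
  rw [gq, gq, exponent_eq]
  ring

lemma gq_mul_sub (s σ x z : ℝ) : gq (s * σ) (x - z) = s⁻¹ * gq σ (x / s - z / s) := by
  rw [gq_mul, sub_div]

lemma integral_gq_mul_sub {s : ℝ} (hs : s ≠ 0) (σ x z : ℝ) :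
    ∫ y in (0 : ℝ)..x, gq (s * σ) (y - z) = ∫ y in (0 : ℝ)..x / s, gq σ (y - z / s) := by
  simp only [gq_mul_sub, intervalIntegral.integral_const_mul]
  rw [intervalIntegral.integral_comp_div (fun y => gq σ (y - z / s)) hs, zero_div, smul_eq_mul,
    inv_mul_cancel_left₀ hs]

lemma gqbar_mul {s : ℝ} (hs : s ≠ 0) (σ x z : ℝ) :
    gqbar (s * σ) x z = s⁻¹ * gqbar σ (x / s) (z / s) := by
  rcases eq_or_ne x 0 with rfl | hx
  · simp only [gqbar, zero_div, if_true, gq_mul]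
  · have prefactor_eq : 1 / x = s⁻¹ * (1 / (x / s)) := by field_simp
    rw [gqbar, gqbar, if_neg hx, if_neg (div_ne_zero hx hs), integral_gq_mul_sub hs,
      prefactor_eq, mul_assoc]

/-- The integral kernel of equation (E): the mixture of `q` and `q̄` with weights `1/N` and
`(N-1)/N`, so that (E) reads `F x = ∫ z, mixedKernel σ N x z * φ_F z`. -/
noncomputable def mixedKernel (σ : ℝ) (N : ℕ) (x z : ℝ) : ℝ :=
  1 / (N : ℝ) * gq σ (x - z) + ((N : ℝ) - 1) / (N : ℝ) * gqbar σ x z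

lemma mixedKernel_mul {s : ℝ} (hs : s ≠ 0) (σ : ℝ) (N : ℕ) (x z : ℝ) :
    mixedKernel (s * σ) N x z = s⁻¹ * mixedKernel σ N (x / s) (z / s) := by
  rw [mixedKernel, mixedKernel, gq_mul_sub, gqbar_mul hs]
  ring

lemma integral_inv_smul_comp_div {E : Type*} [NormedAddCommGroup E] [NormedSpace ℝ E]
    {s : ℝ} (hs : 0 < s) (g : ℝ → E) : ∫ z, s⁻¹ • g (z / s) = ∫ z, g z := by
  rw [integral_smul, Measure.integral_comp_div, abs_of_pos hs, inv_smul_smul₀ hs.ne']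

lemma integral_comp_div_mul_gq {s : ℝ} (hs : 0 < s) (σ : ℝ) (A : ℝ → ℝ) (x : ℝ) :
    ∫ z, A (z / s) * gq (s * σ) (x - z) = ∫ z, A z * gq σ (x / s - z) := by
  rw [← integral_inv_smul_comp_div hs (fun z => A z * gq σ (x / s - z))]
  simp only [gq_mul_sub, smul_eq_mul, mul_left_comm]

section Dilation

variable {Ω : Type*} [MeasurableSpace Ω] (P : Measure Ω) (V : Ω → ℝ)

lemma phip_comp_div {s : ℝ} (hs : 0 < s) (σ : ℝ) (g : ℝ → ℝ) (x : ℝ) :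
    phip P V (s * σ) (fun z => g (z / s)) x = phip P V σ g (x / s) := by
  rw [phip, phip, integral_comp_div_mul_gq hs σ (fun z => Phip P V (g z)),
    integral_comp_div_mul_gq hs σ (fun z => Pip P V (g z))]

lemma phim_comp_div {s : ℝ} (hs : 0 < s) (σ : ℝ) (g : ℝ → ℝ) (x : ℝ) :
    phim P V (s * σ) (fun z => g (z / s)) x = phim P V σ g (x / s) := by
  rw [phim, phim, integral_comp_div_mul_gq hs σ (fun z => Phim P V (g z)),
    integral_comp_div_mul_gq hs σ (fun z => Pim P V (g z))]

lemma phig_comp_div {s : ℝ} (hs : 0 < s) (σ : ℝ) (g : ℝ → ℝ) (x : ℝ) :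
    phig P V (s * σ) (fun z => g (z / s)) x = phig P V σ g (x / s) := by
  simp only [phig, phip_comp_div P V hs, phim_comp_div P V hs, le_div_iff₀ hs, zero_mul]

lemma integral_mixedKernel_mul_phig {s : ℝ} (hs : 0 < s) (σ : ℝ) (N : ℕ) (F : ℝ → ℝ) (x : ℝ) :
    ∫ z, mixedKernel (s * σ) N x z * phig P V (s * σ) (fun y => F (y / s)) z =
      ∫ z, mixedKernel σ N (x / s) z * phig P V σ F z := by
  rw [← integral_inv_smul_comp_div hs (fun z => mixedKernel σ N (x / s) z * phig P V σ F z)]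
  simp only [mixedKernel_mul hs.ne', phig_comp_div P V hs, smul_eq_mul, mul_assoc]

lemma solvesE_iff_mixedKernel (σ : ℝ) (N : ℕ) (F : ℝ → ℝ) :
    SolvesE P V σ N F ↔ ∀ x, F x = ∫ z, mixedKernel σ N x z * phig P V σ F z :=
  Iff.rfl

theorem stmt8_general [IsProbabilityMeasure P] (hV : Integrable V P) {N : ℕ} (hN : 1 ≤ N)
    {s σ : ℝ} (hs : 0 < s) (hσ : 0 < σ) {F : ℝ → ℝ} (hF : Measurable F) :
    SolvesE P V (s * σ) N (fun x => F (x / s)) ↔ SolvesE P V σ N F := by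
  simp only [solvesE_iff_mixedKernel, integral_mixedKernel_mul_phig P V hs]
  exact (Equiv.divRight₀ s hs.ne').forall_congr fun _ => Iff.rfl

end Dilation

/-- If `F₁` is a continuous nondecreasing solution of (E) with parameter `σ = 1`
and values in `(m,M)`, then `x ↦ F₁(x/σ)` solves (E) with parameter `σ`. -/
theorem stmt8 {Ω : Type*} [MeasurableSpace Ω] (P : Measure Ω) [IsProbabilityMeasure P]
    (V : Ω → ℝ) (hVmeas : Measurable V) (hV : Integrable V P)
    (m M : ℝ) (hsupp : SuppIoo P V m M)
    (N : ℕ) (hN : 1 ≤ N) (σ : ℝ) (hσ : 0 < σ)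
    (F₁ : ℝ → ℝ) (hFc : Continuous F₁) (hFm : Monotone F₁)
    (hFr : ∀ x, F₁ x ∈ Set.Ioo m M)
    (hFsol : SolvesE P V 1 N F₁) :
    SolvesE P V σ N (fun x => F₁ (x / σ)) := by
  simpa only [mul_one] using
    (stmt8_general P V hV hN hσ one_pos hFc.measurable).2 hFsol
end

section
/- Suppose V is symmetric, i.e. V and −V have the same law, and suppose Π⁺ is continuous. Let σ > 0, N ≥ 1, and let F : ℝ → (m, M) be a continuous solution of equation (E). Then the function x ↦ −F(−x) is also a solution of equation (E). Consequently, if (E) admits a unique continuous solution with values in (m, M), this solution satisfies F(−x) = −F(x) for all x ∈ ℝ. -/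
open MeasureTheory Filter Set

/-!
Equation (E) depends on `V` only through its law `μ`. Since `μ` is symmetric and has no atoms,
the reflection `v ↦ -v` exchanges `{V > -y}` with `{V ≤ y}` up to a null set, hence `Π⁺(-y) = Π⁻(y)`
and `Φ⁺(-y) = -Φ⁻(y)`. The Gaussian being even, replacing `g` by `x ↦ -g (-x)` therefore turns
`φ⁺_g(x)` into `-φ⁻_g(-x)` and conversely. The kernel of (E) is invariant under
`(x, z) ↦ (-x, -z)`, so the substitution `z ↦ -z` carries (E) for `F` to (E) for `x ↦ -F (-x)`; the
convention for `φ` at `0` is the only asymmetry, and it is invisible to the integral.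
-/

section Measure

theorem nullSingletonClass_of_continuous_measureReal_Ioi {α : Type*} [LinearOrder α]
    [TopologicalSpace α] [OrderTopology α] [DenselyOrdered α] [NoMinOrder α] [MeasurableSpace α]
    [OpensMeasurableSpace α] {μ : Measure α} [IsFiniteMeasure μ]
    (hμ : Continuous fun y => μ.real (Ioi y)) : NullSingletonClass μ where
  measure_singleton y := by
    have singleton_le : ∀ t < y, μ.real {y} ≤ μ.real (Ioi t) - μ.real (Ioi y) := fun t ht =>
      calc μ.real {y} ≤ μ.real (Ioi t \ Ioi y) :=
            measureReal_mono (singleton_subset_iff.2 ⟨ht, lt_irrefl y⟩)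
        _ = μ.real (Ioi t) - μ.real (Ioi y) :=
            measureReal_sdiff (Ioi_subset_Ioi ht.le) measurableSet_Ioi
    have tendsto_zero : Tendsto (fun t => μ.real (Ioi t) - μ.real (Ioi y)) (nhdsWithin y (Iio y))
        (nhds 0) := by
      simpa only [sub_self] using
        ((hμ.tendsto y).sub_const (μ.real (Ioi y))).mono_left nhdsWithin_le_nhds
    have nonpos : μ.real {y} ≤ 0 :=
      ge_of_tendsto tendsto_zero (eventually_mem_nhdsWithin.mono singleton_le)
    exact (measureReal_eq_zero_iff).1 (nonpos.antisymm measureReal_nonneg)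

theorem isNegInvariant_map_of_map_eq_map_neg {Ω G : Type*} [MeasurableSpace Ω] [MeasurableSpace G]
    [Neg G] [MeasurableNeg G] {P : Measure Ω} {V : Ω → G} (hV : AEMeasurable V P)
    (hsym : P.map V = P.map (fun ω => -V ω)) : (P.map V).IsNegInvariant where
  neg_eq_self :=
    (AEMeasurable.map_map_of_aemeasurable measurable_neg.aemeasurable hV).trans hsym.symm

theorem setIntegral_neg_set {G E : Type*} [MeasurableSpace G] [InvolutiveNeg G] [MeasurableNeg G]
    [NormedAddCommGroup E] [NormedSpace ℝ E] (μ : Measure G) [μ.IsNegInvariant] (s : Set G)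
    (f : G → E) : ∫ x in -s, f x ∂μ = ∫ x in s, f (-x) ∂μ := by
  have h := (Measure.measurePreserving_neg μ).setIntegral_preimage_emb
    (MeasurableEquiv.neg G).measurableEmbedding f (-s)
  rw [← h, neg_preimage, neg_neg]

end Measure

section Kernel

variable (σ x z : ℝ)

theorem gq_neg : gq σ (-z) = gq σ z := by
  simp only [gq, neg_sq]

theorem gqbar_neg_neg : gqbar σ (-x) (-z) = gqbar σ x z := by
  have integral_eq : ∫ y in (0 : ℝ)..-x, gq σ (y - -z) = -∫ y in (0 : ℝ)..x, gq σ (y - z) :=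
    calc ∫ y in (0 : ℝ)..-x, gq σ (y - -z)
        = -∫ y in (0 : ℝ)..x, gq σ (-y - -z) := by
          rw [intervalIntegral.integral_comp_neg (fun y => gq σ (y - -z)), neg_zero,
            intervalIntegral.integral_symm]
      _ = -∫ y in (0 : ℝ)..x, gq σ (y - z) := by
          simp only [neg_sub_neg, ← neg_sub _ z, gq_neg]
  simp only [gqbar, neg_eq_zero, gq_neg, integral_eq, one_div, inv_neg, neg_mul_neg]

theorem integral_comp_neg_mul_gq (f : ℝ → ℝ) :
    ∫ z, f (-z) * gq σ (x - z) = ∫ z, f z * gq σ (-x - z) := by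
  rw [← integral_neg_eq_self]
  simp only [neg_neg, sub_neg_eq_add, ← gq_neg σ (x + _), neg_add']

end Kernel

section Reflection

variable {Ω : Type*} [MeasurableSpace Ω] {P : Measure Ω} {V : Ω → ℝ}

theorem Pip_eq_map_real_Ioi (hV : AEMeasurable V P) (y : ℝ) :
    Pip P V y = (P.map V).real (Ioi y) :=
  (map_measureReal_apply_of_aemeasurable hV measurableSet_Ioi).symm

theorem Pim_eq_map_real_Iic (hV : AEMeasurable V P) (y : ℝ) :
    Pim P V y = (P.map V).real (Iic y) :=
  (map_measureReal_apply_of_aemeasurable hV measurableSet_Iic).symm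

theorem Phip_eq_setIntegral_map (hV : AEMeasurable V P) (y : ℝ) :
    Phip P V y = ∫ v in Ioi y, v ∂P.map V :=
  (setIntegral_map measurableSet_Ioi aestronglyMeasurable_id hV).symm

theorem Phim_eq_setIntegral_map (hV : AEMeasurable V P) (y : ℝ) :
    Phim P V y = ∫ v in Iic y, v ∂P.map V :=
  (setIntegral_map measurableSet_Iic aestronglyMeasurable_id hV).symm

theorem nullSingletonClass_map_of_continuous_Pip [IsFiniteMeasure P] (hV : AEMeasurable V P)
    (hcont : Continuous (Pip P V)) : NullSingletonClass (P.map V) :=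
  nullSingletonClass_of_continuous_measureReal_Ioi <| by
    simpa only [← Pip_eq_map_real_Ioi hV] using hcont

theorem SuppIoo.le_and_le_of_ae_mem_Icc {m M a b : ℝ} (h : SuppIoo P V m M)
    (hab : ∀ᵐ ω ∂P, V ω ∈ Icc a b) : a ≤ m ∧ M ≤ b := by
  obtain ⟨-, -, above_pos, below_pos⟩ := h
  constructor
  · refine le_of_forall_lt_imp_le_of_dense fun y hy => le_of_not_gt fun hmy => ?_
    refine (below_pos y hmy).ne' (measure_eq_zero_iff_ae_notMem.2 ?_)
    exact hab.mono fun ω hω => not_le.2 (hy.trans_le hω.1)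
  · refine le_of_not_gt fun hbM => (above_pos b hbM).ne' (measure_eq_zero_iff_ae_notMem.2 ?_)
    exact hab.mono fun ω hω => not_lt.2 hω.2

theorem SuppIoo.eq_neg {m M : ℝ} (h : SuppIoo P V m M) (hV : AEMeasurable V P)
    [(P.map V).IsNegInvariant] : m = -M := by
  have law_mem : ∀ᵐ v ∂P.map V, v ∈ Icc m M := (ae_map_iff hV measurableSet_Icc).2 h.2.1
  have neg_mem : ∀ᵐ ω ∂P, V ω ∈ Icc (-M) (-m) :=
    (ae_of_ae_map hV ((Measure.measurePreserving_neg _).quasiMeasurePreserving.ae law_mem)).mono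
      fun ω hω => ⟨neg_le.1 hω.2, le_neg.1 hω.1⟩
  obtain ⟨hMm, hmM⟩ := h.le_and_le_of_ae_mem_Icc neg_mem
  exact (le_neg.1 hmM).antisymm hMm

variable [(P.map V).IsNegInvariant] [NullSingletonClass (P.map V)]

theorem Pip_neg (hV : AEMeasurable V P) (y : ℝ) : Pip P V (-y) = Pim P V y := by
  rw [Pip_eq_map_real_Ioi hV, Pim_eq_map_real_Iic hV, ← measureReal_congr Iio_ae_eq_Iic,
    ← neg_Iio, measureReal_def, Measure.measure_neg, measureReal_def]

theorem Phip_neg (hV : AEMeasurable V P) (y : ℝ) : Phip P V (-y) = -Phim P V y := by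
  rw [Phip_eq_setIntegral_map hV, Phim_eq_setIntegral_map hV, integral_Iic_eq_integral_Iio,
    ← neg_Iio, setIntegral_neg_set, integral_neg]

theorem phip_neg_comp_neg (hV : AEMeasurable V P) (σ : ℝ) (g : ℝ → ℝ) (x : ℝ) :
    phip P V σ (fun z => -g (-z)) x = -phim P V σ g (-x) := by
  simp only [phip, phim, Phip_neg hV, Pip_neg hV, neg_mul, integral_neg, neg_div,
    integral_comp_neg_mul_gq σ x fun z => Phim P V (g z),
    integral_comp_neg_mul_gq σ x fun z => Pim P V (g z)]

theorem phim_neg_comp_neg (hV : AEMeasurable V P) (σ : ℝ) (g : ℝ → ℝ) (x : ℝ) :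
    phim P V σ (fun z => -g (-z)) x = -phip P V σ g (-x) := by
  have h := phip_neg_comp_neg hV σ (fun z => -g (-z)) (-x)
  simp only [neg_neg] at h
  rw [h, neg_neg]

theorem phig_neg_comp_neg (hV : AEMeasurable V P) (σ : ℝ) (g : ℝ → ℝ) {x : ℝ} (hx : x ≠ 0) :
    phig P V σ (fun z => -g (-z)) x = -phig P V σ g (-x) := by
  rcases hx.lt_or_gt with hneg | hpos
  · rw [phig, if_neg hneg.not_ge, phim_neg_comp_neg hV, phig, if_pos (neg_nonneg.2 hneg.le)]
  · rw [phig, if_pos hpos.le, phip_neg_comp_neg hV, phig, if_neg (neg_lt_zero.2 hpos).not_ge]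

theorem SolvesE.neg_comp_neg (hV : AEMeasurable V P) {σ : ℝ} {N : ℕ} {F : ℝ → ℝ}
    (hF : SolvesE P V σ N F) : SolvesE P V σ N (fun x => -F (-x)) := by
  intro x
  beta_reduce
  rw [hF (-x), ← integral_neg_eq_self, ← integral_neg]
  refine integral_congr_ae ((Measure.ae_ne volume 0).mono fun z hz => ?_)
  have gq_reflect : gq σ (-x - -z) = gq σ (x - z) := by rw [← neg_sub', gq_neg]
  beta_reduce
  rw [phig_neg_comp_neg hV σ F hz, gqbar_neg_neg, gq_reflect, mul_neg]

end Reflection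

theorem neg_comp_neg_mem_continuous_Ioo {M : ℝ} {G : ℝ → ℝ}
    (hG : Continuous G ∧ ∀ x, G x ∈ Ioo (-M) M) :
    (Continuous fun x => -G (-x)) ∧ ∀ x, -G (-x) ∈ Ioo (-M) M :=
  ⟨(hG.1.comp continuous_neg).neg, fun x => ⟨neg_lt_neg (hG.2 (-x)).2, neg_lt.1 (hG.2 (-x)).1⟩⟩

theorem stmt9_general {Ω : Type*} [MeasurableSpace Ω] (P : Measure Ω) [IsFiniteMeasure P]
    (V : Ω → ℝ) (hV : Integrable V P)
    (hsym : P.map V = P.map (fun ω => -V ω)) (hcont : Continuous (Pip P V))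
    (σ : ℝ) (_hσ : 0 < σ) (N : ℕ) (_hN : 1 ≤ N)
    (S : Set (ℝ → ℝ)) (hS : ∀ G ∈ S, (fun x => -G (-x)) ∈ S)
    (F : ℝ → ℝ) (hFS : F ∈ S) (hFsol : SolvesE P V σ N F) :
    SolvesE P V σ N (fun x => -F (-x)) ∧
    ((∀ G ∈ S, SolvesE P V σ N G → G = F) → ∀ x : ℝ, F (-x) = -F x) := by
  have := isNegInvariant_map_of_map_eq_map_neg hV.aemeasurable hsym
  have := nullSingletonClass_map_of_continuous_Pip hV.aemeasurable hcont
  have reflection_solves := hFsol.neg_comp_neg hV.aemeasurable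
  refine ⟨reflection_solves, fun unique x => ?_⟩
  exact neg_eq_iff_eq_neg.1 (congrFun (unique _ (hS F hFS) reflection_solves) x)

/-- If `V` is symmetric and `Π⁺` is continuous, and `F` is a continuous solution of
(E) with values in `(m,M)`, then `x ↦ −F(−x)` also solves (E); hence if (E) has a unique such
solution, that solution is odd. -/
theorem stmt9 {Ω : Type*} [MeasurableSpace Ω] (P : Measure Ω) [IsProbabilityMeasure P]
    (V : Ω → ℝ) (hVmeas : Measurable V) (hV : Integrable V P)
    (m M : ℝ) (hsupp : SuppIoo P V m M)
    (hsym : P.map V = P.map (fun ω => -V ω))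
    (hcont : Continuous (Pip P V))
    (σ : ℝ) (hσ : 0 < σ) (N : ℕ) (hN : 1 ≤ N)
    (F : ℝ → ℝ) (hFc : Continuous F) (hFr : ∀ x, F x ∈ Set.Ioo m M)
    (hFsol : SolvesE P V σ N F) :
    SolvesE P V σ N (fun x => -F (-x)) ∧
    ((∀ G : ℝ → ℝ, Continuous G → (∀ x, G x ∈ Set.Ioo m M) → SolvesE P V σ N G → G = F) →
      ∀ x : ℝ, F (-x) = -F x) := by
  have := isNegInvariant_map_of_map_eq_map_neg hVmeas.aemeasurable hsym
  obtain rfl := hsupp.eq_neg hVmeas.aemeasurable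
  simpa only [mem_ofPred_eq, and_imp] using stmt9_general P V hV hsym hcont σ hσ N hN
    {G | Continuous G ∧ ∀ x, G x ∈ Ioo (-M) M} (fun _ => neg_comp_neg_mem_continuous_Ioo)
    F ⟨hFc, hFr⟩ hFsol
end
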